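/- Let M = (S, A, δ) be a finite fuzzy transition system with discount factor γ ∈ (0,1). Then the functional Δ has exactly one fixpoint among the functions S × S → [0,1]; that is, there exists a unique d : S × S → [0,1] with Δ(d) = d. -/

import Mathlib

/-!
The functional `Δ` is a `γ`-contraction for the sup metric on `S → S → ℝ`. Every operation from
which it is built (`min` with a fixed coupling value, finite maxima and minima, the infimum over
couplings) is monotone and commutes with adding a constant up to an inequality, so `d ≤ d' + ε`
pointwise, with `ε ≥ 0`, gives `Δ(d) ≤ Δ(d') + γ ε` (`Delta_le_add`). The set of couplings does not
depend on `d`, so this needs no information about it, not even that it is nonempty. Banach's fixed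
point theorem yields a unique fixpoint on the whole space `S → S → ℝ`. Since `Δ` preserves the
closed set of `[0,1]`-valued functions (`Delta_mem_Icc`), the iterates of the zero function stay
there, and so does their limit, which is the fixpoint.
-/

open Finset
open scoped Classical

noncomputable section

variable {S A : Type*} [Fintype S] [Nonempty S] [Fintype A] [Nonempty A]

/-- The maximum value of a fuzzy subset `μ : S → ℝ` over the finite nonempty set `S`. -/
def maxS (μ : S → ℝ) : ℝ := Finset.univ.sup' Finset.univ_nonempty μ

/-- Feasibility for the mathematical program defining the lifted distance. -/
def Feasible (μ η : S → ℝ) (x : S → S → ℝ) : Prop :=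
  (∀ u v, 0 ≤ x u v) ∧ (∀ u, maxS (x u) = μ u) ∧ (∀ v, maxS (fun u => x u v) = η v)

/-- The lifted distance `d̂(μ,η)` induced by `d` on fuzzy subsets. -/
def liftDist (d : S → S → ℝ) (μ η : S → ℝ) : ℝ :=
  if maxS μ = maxS η then
    sInf {r : ℝ | ∃ x : S → S → ℝ, Feasible μ η x ∧
      r = Finset.univ.sup' Finset.univ_nonempty
            (fun p : S × S => min (d p.1 p.2) (x p.1 p.2))}
  else 1

/-- Distance from a fuzzy subset to a finite set of fuzzy subsets. -/
def liftDistSet (d : S → S → ℝ) (μ : S → ℝ) (W : Finset (S → ℝ)) : ℝ :=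
  if h : W.Nonempty then W.inf' h (liftDist d μ) else 1

/-- Max of `f` over a finite set of fuzzy subsets, `0` if the set is empty. -/
def sup0 (Y : Finset (S → ℝ)) (f : (S → ℝ) → ℝ) : ℝ :=
  if h : Y.Nonempty then Y.sup' h f else 0

/-- Hausdorff distance induced by `d` on finite sets of fuzzy subsets. -/
def Hdist (d : S → S → ℝ) (Y Z : Finset (S → ℝ)) : ℝ :=
  if Y = ∅ ∧ Z = ∅ then 0
  else max (sup0 Y fun μ => liftDistSet d μ Z) (sup0 Z fun ν => liftDistSet d ν Y)

/-- The functional `Δ` with discount factor `γ` on a fuzzy transition system `δ`. -/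
def Delta (γ : ℝ) (δ : S → A → Finset (S → ℝ)) (d : S → S → ℝ) : S → S → ℝ :=
  fun s t => γ * Finset.univ.sup' Finset.univ_nonempty (fun a => Hdist d (δ s a) (δ t a))

/-- All fuzzy subsets occurring in the transition function take values in `[0,1]`. -/
def FTSvalid (δ : S → A → Finset (S → ℝ)) : Prop :=
  ∀ s a, ∀ μ ∈ δ s a, ∀ u, μ u ∈ Set.Icc (0:ℝ) 1

/-- The set `Θ_M` of membership values occurring in the system, together with `0` and `1`. -/
def ThetaM (δ : S → A → Finset (S → ℝ)) : Set ℝ :=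
  {r : ℝ | ∃ s a μ, μ ∈ δ s a ∧ ∃ u, μ u = r} ∪ {0, 1}

/-- The supremum norm of the difference of two distance functions. -/
def dnorm (d d' : S → S → ℝ) : ℝ :=
  Finset.univ.sup' Finset.univ_nonempty (fun p : S × S => |d p.1 p.2 - d' p.1 p.2|)

end

section Helpers

variable {S A : Type*} [Fintype S] [Nonempty S] [Fintype A] [Nonempty A]

lemma liftDist_le_add {d d' : S → S → ℝ} {ε : ℝ} (hε : 0 ≤ ε)
    (h : ∀ s t, d s t ≤ d' s t + ε) (μ η : S → ℝ) :
    liftDist d μ η ≤ liftDist d' μ η + ε := by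
  unfold liftDist
  split_ifs with hm
  · by_cases hx : ∃ x, Feasible μ η x
    · rw [← sub_le_iff_le_add]
      apply le_csInf
      · obtain ⟨x, hx⟩ := hx
        exact ⟨_, x, hx, rfl⟩
      rintro r ⟨x, hx, rfl⟩
      rw [sub_le_iff_le_add]
      -- Couplings are nonnegative, so the value of `d` at one pair bounds the objective below.
      have hbdd : BddBelow {r : ℝ | ∃ x : S → S → ℝ, Feasible μ η x ∧
          r = Finset.univ.sup' Finset.univ_nonempty
            (fun p : S × S => min (d p.1 p.2) (x p.1 p.2))} := by
        let p₀ : S × S := Classical.arbitrary _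
        refine ⟨min (d p₀.1 p₀.2) 0, ?_⟩
        rintro r ⟨y, hy, rfl⟩
        exact (min_le_min_left _ (hy.1 p₀.1 p₀.2)).trans
          (Finset.le_sup' (fun p : S × S => min (d p.1 p.2) (y p.1 p.2)) (Finset.mem_univ p₀))
      refine (csInf_le hbdd ⟨x, hx, rfl⟩).trans (Finset.sup'_le _ _ fun p hp => ?_)
      have h1 := Finset.le_sup' (fun p : S × S => min (d' p.1 p.2) (x p.1 p.2)) hp
      refine le_trans ?_ (add_le_add_left h1 ε)
      rw [← min_add_add_right]
      exact min_le_min (h _ _) (by linarith)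
    · -- Without couplings both infima are `sInf ∅ = 0`.
      have hE : ∀ e : S → S → ℝ, {r : ℝ | ∃ x : S → S → ℝ, Feasible μ η x ∧
          r = Finset.univ.sup' Finset.univ_nonempty
            (fun p : S × S => min (e p.1 p.2) (x p.1 p.2))} = ∅ := by
        intro e
        ext r
        simp only [Set.mem_setOf_eq, Set.mem_empty_iff_false, iff_false]
        rintro ⟨x, h, -⟩
        exact hx ⟨x, h⟩
      rw [hE, hE]
      linarith
  · linarith

lemma liftDistSet_le_add {d d' : S → S → ℝ} {ε : ℝ} (hε : 0 ≤ ε)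
    (h : ∀ s t, d s t ≤ d' s t + ε) (μ : S → ℝ) (W : Finset (S → ℝ)) :
    liftDistSet d μ W ≤ liftDistSet d' μ W + ε := by
  unfold liftDistSet
  split_ifs with hW
  · rw [← sub_le_iff_le_add]
    refine Finset.le_inf' _ _ fun ν hν => ?_
    rw [sub_le_iff_le_add]
    exact (Finset.inf'_le _ hν).trans (liftDist_le_add hε h μ ν)
  · linarith

lemma sup0_le_add {ε : ℝ} (hε : 0 ≤ ε) (Y : Finset (S → ℝ)) {f g : (S → ℝ) → ℝ}
    (h : ∀ μ, f μ ≤ g μ + ε) : sup0 Y f ≤ sup0 Y g + ε := by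
  unfold sup0
  split_ifs with hY
  · exact Finset.sup'_le _ _ fun μ hμ =>
      (h μ).trans (add_le_add_left (Finset.le_sup' g hμ) ε)
  · linarith

lemma Hdist_le_add {d d' : S → S → ℝ} {ε : ℝ} (hε : 0 ≤ ε)
    (h : ∀ s t, d s t ≤ d' s t + ε) (Y Z : Finset (S → ℝ)) :
    Hdist d Y Z ≤ Hdist d' Y Z + ε := by
  unfold Hdist
  split_ifs
  · linarith
  · rw [← max_add_add_right]
    exact max_le_max (sup0_le_add hε _ fun μ => liftDistSet_le_add hε h μ Z)
      (sup0_le_add hε _ fun ν => liftDistSet_le_add hε h ν Y)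

/-- One-sided contraction estimate for `Δ`; applied in both directions it bounds the distance. -/
lemma Delta_le_add {γ : ℝ} (hγ : 0 ≤ γ) (δ : S → A → Finset (S → ℝ)) {d d' : S → S → ℝ} {ε : ℝ}
    (hε : 0 ≤ ε) (h : ∀ s t, d s t ≤ d' s t + ε) (s t : S) :
    Delta γ δ d s t ≤ Delta γ δ d' s t + γ * ε := by
  unfold Delta
  rw [← mul_add]
  refine mul_le_mul_of_nonneg_left (Finset.sup'_le _ _ fun a ha => ?_) hγ
  exact (Hdist_le_add hε h _ _).trans
    (add_le_add_left (Finset.le_sup' (fun a => Hdist d' (δ s a) (δ t a)) ha) ε)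

lemma Delta_contracting {γ : ℝ} (h0 : 0 ≤ γ) (h1 : γ < 1) (δ : S → A → Finset (S → ℝ)) :
    ContractingWith (⟨γ, h0⟩ : NNReal) (Delta γ δ) := by
  refine ⟨h1, LipschitzWith.of_dist_le_mul fun d d' => ?_⟩
  have hb : ∀ s t, |d s t - d' s t| ≤ dist d d' := fun s t =>
    (dist_le_pi_dist (d s) (d' s) t).trans (dist_le_pi_dist d d' s)
  have hnn : 0 ≤ γ * dist d d' := mul_nonneg h0 dist_nonneg
  change dist (Delta γ δ d) (Delta γ δ d') ≤ γ * dist d d'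
  refine (dist_pi_le_iff hnn).2 fun s => (dist_pi_le_iff hnn).2 fun t => ?_
  have e1 := Delta_le_add (d := d) (d' := d') h0 δ dist_nonneg
    (fun s t => by linarith [(abs_le.1 (hb s t)).2]) s t
  have e2 := Delta_le_add (d := d') (d' := d) h0 δ dist_nonneg
    (fun s t => by linarith [(abs_le.1 (hb s t)).1]) s t
  rw [Real.dist_eq, abs_le]
  constructor <;> linarith

lemma liftDist_mem_Icc {d : S → S → ℝ} (hd : ∀ s t, d s t ∈ Set.Icc (0 : ℝ) 1) (μ η : S → ℝ) :
    liftDist d μ η ∈ Set.Icc (0 : ℝ) 1 := by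
  unfold liftDist
  split_ifs with hm
  · have hnn : ∀ r ∈ {r : ℝ | ∃ x : S → S → ℝ, Feasible μ η x ∧
          r = Finset.univ.sup' Finset.univ_nonempty
            (fun p : S × S => min (d p.1 p.2) (x p.1 p.2))}, 0 ≤ r := by
      rintro r ⟨x, hx, rfl⟩
      let p₀ : S × S := Classical.arbitrary _
      exact (le_min (hd p₀.1 p₀.2).1 (hx.1 p₀.1 p₀.2)).trans
        (Finset.le_sup' (fun p : S × S => min (d p.1 p.2) (x p.1 p.2)) (Finset.mem_univ p₀))
    refine ⟨Real.sInf_nonneg hnn, ?_⟩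
    by_cases hx : ∃ x, Feasible μ η x
    · obtain ⟨x, hx⟩ := hx
      refine (csInf_le ⟨0, hnn⟩ ⟨x, hx, rfl⟩).trans (Finset.sup'_le _ _ fun p _ => ?_)
      exact (min_le_left _ _).trans (hd _ _).2
    · -- Without couplings the infimum is `sInf ∅ = 0`.
      refine (Real.sInf_nonpos ?_).trans zero_le_one
      rintro r ⟨x, h, -⟩
      exact (hx ⟨x, h⟩).elim
  · simp

lemma liftDistSet_mem_Icc {d : S → S → ℝ} (hd : ∀ s t, d s t ∈ Set.Icc (0 : ℝ) 1)
    (μ : S → ℝ) (W : Finset (S → ℝ)) : liftDistSet d μ W ∈ Set.Icc (0 : ℝ) 1 := by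
  unfold liftDistSet
  split_ifs with hW
  · obtain ⟨ν, -, h⟩ := Finset.exists_mem_eq_inf' hW (liftDist d μ)
    exact h ▸ liftDist_mem_Icc hd μ ν
  · simp

lemma sup0_mem_Icc (Y : Finset (S → ℝ)) {f : (S → ℝ) → ℝ}
    (hf : ∀ μ, f μ ∈ Set.Icc (0 : ℝ) 1) : sup0 Y f ∈ Set.Icc (0 : ℝ) 1 := by
  unfold sup0
  split_ifs with hY
  · obtain ⟨ν, -, h⟩ := Finset.exists_mem_eq_sup' hY f
    exact h ▸ hf ν
  · simp

lemma Hdist_mem_Icc {d : S → S → ℝ} (hd : ∀ s t, d s t ∈ Set.Icc (0 : ℝ) 1)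
    (Y Z : Finset (S → ℝ)) : Hdist d Y Z ∈ Set.Icc (0 : ℝ) 1 := by
  unfold Hdist
  split_ifs
  · simp
  · have h1 := sup0_mem_Icc Y fun μ => liftDistSet_mem_Icc hd μ Z
    have h2 := sup0_mem_Icc Z fun ν => liftDistSet_mem_Icc hd ν Y
    exact ⟨h1.1.trans (le_max_left _ _), max_le h1.2 h2.2⟩

lemma Delta_mem_Icc {γ : ℝ} (h0 : 0 ≤ γ) (h1 : γ ≤ 1) (δ : S → A → Finset (S → ℝ))
    {d : S → S → ℝ} (hd : ∀ s t, d s t ∈ Set.Icc (0 : ℝ) 1) (s t : S) :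
    Delta γ δ d s t ∈ Set.Icc (0 : ℝ) 1 := by
  unfold Delta
  obtain ⟨a, -, h⟩ := Finset.exists_mem_eq_sup' Finset.univ_nonempty
    (fun a => Hdist d (δ s a) (δ t a))
  rw [h]
  have hH := Hdist_mem_Icc hd (δ s a) (δ t a)
  exact ⟨mul_nonneg h0 hH.1, mul_le_one₀ h1 hH.1 hH.2⟩

end Helpers

/-- for `γ ∈ (0,1)`, the functional `Δ` has exactly one fixpoint among
the functions `S × S → [0,1]`. -/
theorem Delta_unique_fixpoint {S A : Type*} [Fintype S] [Nonempty S] [Fintype A] [Nonempty A]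
    (γ : ℝ) (hγ : γ ∈ Set.Ioo (0:ℝ) 1)
    (δ : S → A → Finset (S → ℝ)) (hδ : FTSvalid δ) :
    ∃! d : S → S → ℝ, (∀ s t, d s t ∈ Set.Icc (0:ℝ) 1) ∧ Delta γ δ d = d := by
  have hc := Delta_contracting hγ.1.le hγ.2 δ
  refine ⟨hc.fixedPoint, ⟨?_, hc.fixedPoint_isFixedPt⟩, fun d hd => hc.fixedPoint_unique hd.2⟩
  have hiter : ∀ n s t, (Delta γ δ)^[n] 0 s t ∈ Set.Icc (0 : ℝ) 1 := by
    intro n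
    induction n with
    | zero => simp
    | succ n ih =>
      rw [Function.iterate_succ_apply']
      exact Delta_mem_Icc hγ.1.le hγ.2.le δ ih
  intro s t
  have hlim := hc.tendsto_iterate_fixedPoint 0
  exact isClosed_Icc.mem_of_tendsto (tendsto_pi_nhds.1 (tendsto_pi_nhds.1 hlim s) t)
    (Filter.Eventually.of_forall fun n => hiter n s t)
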